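/- Let g be a continuous complex-valued function on the closed unit disk and ψ ∈ L¹(𝕋) bounded. If f : 𝔻 → ℂ satisfies f(z) = P_ψ(z) − G_g(z) for all z ∈ 𝔻, then at the origin |f_z(0)| + |f_{z̄}(0)| ≤ (4/π)‖P_ψ‖_∞ + (2/3)‖g‖_∞. -/

import Mathlib

open Metric MeasureTheory Set Filter

noncomputable section

/-- The Wirtinger derivative `∂f/∂z = (f_x - i f_y)/2`. -/
def wdz (f : ℂ → ℂ) (z : ℂ) : ℂ :=
  (fderiv ℝ f z 1 - Complex.I * fderiv ℝ f z Complex.I) / 2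

/-- The Wirtinger derivative `∂f/∂z̄ = (f_x + i f_y)/2`. -/
def wdzbar (f : ℂ → ℂ) (z : ℂ) : ℂ :=
  (fderiv ℝ f z 1 + Complex.I * fderiv ℝ f z Complex.I) / 2

/-- The Laplacian `Δf = f_xx + f_yy` (equivalently `4 f_{z z̄}`). -/
def lap (f : ℂ → ℂ) (z : ℂ) : ℂ :=
  fderiv ℝ (fun w => fderiv ℝ f w 1) z 1 +
    fderiv ℝ (fun w => fderiv ℝ f w Complex.I) z Complex.I

/-- The Poisson integral `P_ψ(z) = (1/2π) ∫₀^{2π} ((1-|z|²)/|1-z e^{-it}|²) ψ(e^{it}) dt`. -/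
def poissonIntegral (ψ : ℂ → ℂ) (z : ℂ) : ℂ :=
  (1 / (2 * Real.pi) : ℝ) • ∫ t in (0:ℝ)..(2 * Real.pi),
    (((1 - ‖z‖ ^ 2) / ‖1 - z * Complex.exp (-(Complex.I * (t : ℂ)))‖ ^ 2 : ℝ) : ℂ) *
      ψ (Complex.exp (Complex.I * (t : ℂ)))

/-- The Green potential `G_g(z) = (1/2π) ∫_𝔻 log|(1 - z w̄)/(z - w)| g(w) dA(w)`. -/
def greenPotential (g : ℂ → ℂ) (z : ℂ) : ℂ :=
  (1 / (2 * Real.pi) : ℝ) • ∫ w in ball (0:ℂ) 1,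
    ((Real.log ‖(1 - z * (starRingEnd ℂ) w) / (z - w)‖ : ℝ) : ℂ) * g w

/-- `sup_{z ∈ 𝔻} |g(z)|`. -/
def supD (g : ℂ → ℂ) : ℝ := sSup ((fun z => ‖g z‖) '' ball (0:ℂ) 1)

/-- The function `μ(r)` with constant `c` in place of `‖g‖_∞`. -/
def mu (c r : ℝ) : ℝ :=
  c * (1 - r ^ 2) / (8 * r ^ 2) *
    ((1 + r ^ 2) / (1 - r ^ 2) - (1 - r ^ 2) / (2 * r) * Real.log ((1 + r) / (1 - r)))


lemma wirt_le (f : ℂ → ℂ) (z : ℂ) : ‖wdz f z‖ + ‖wdzbar f z‖ ≤ ‖fderiv ℝ f z‖ := by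
  set p := wdz f z with hp
  set q := wdzbar f z with hq
  have key : ∀ e : ℂ, fderiv ℝ f z e = p * e + q * (starRingEnd ℂ) e := by
    intro e
    have h1 : e = e.re • (1:ℂ) + e.im • Complex.I := by
      apply Complex.ext <;> simp
    have h2 : fderiv ℝ f z e = (e.re:ℂ) * fderiv ℝ f z 1 + (e.im:ℂ) * fderiv ℝ f z Complex.I := by
      conv_lhs => rw [h1]
      rw [map_add, map_smul, map_smul]; simp
    rw [h2, hp, hq, wdz, wdzbar]
    have h3 : e = (e.re:ℂ) + e.im * Complex.I := (Complex.re_add_im e).symm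
    have h4 : (starRingEnd ℂ) e = (e.re:ℂ) - e.im * Complex.I := by
      apply Complex.ext <;> simp
    rw [h4]
    conv_rhs => rw [h3]
    simp only [Complex.add_re, Complex.ofReal_re, Complex.mul_re, Complex.I_re, Complex.I_im, Complex.ofReal_im, Complex.add_im, Complex.mul_im, mul_zero, mul_one, add_zero, zero_add, sub_self]
    linear_combination ((e.im:ℂ) * fderiv ℝ f z Complex.I) * Complex.I_sq
  set e : ℂ := Complex.exp (((q.arg - p.arg) / 2 : ℝ) * Complex.I) with he
  have hen : ‖e‖ = 1 := Complex.norm_exp_ofReal_mul_I _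
  have hce : (starRingEnd ℂ) e = Complex.exp (-((q.arg - p.arg) / 2 : ℝ) * Complex.I) := by
    rw [he, ← Complex.exp_conj, map_mul, Complex.conj_ofReal, Complex.conj_I]; ring_nf
  have h := (fderiv ℝ f z).le_opNorm e
  rw [hen, mul_one, key e] at h
  refine le_trans (le_of_eq ?_) h
  have : p * e + q * (starRingEnd ℂ) e =
      ((‖p‖ + ‖q‖ : ℝ) : ℂ) * Complex.exp (((q.arg + p.arg) / 2 : ℝ) * Complex.I) := by
    have e1 : p * e = ‖p‖ * Complex.exp (((q.arg + p.arg) / 2 : ℝ) * Complex.I) := by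
      conv_lhs => rw [← Complex.norm_mul_exp_arg_mul_I p]
      rw [he, mul_assoc, ← Complex.exp_add]; congr 2; push_cast; ring
    have e2 : q * (starRingEnd ℂ) e = ‖q‖ * Complex.exp (((q.arg + p.arg) / 2 : ℝ) * Complex.I) := by
      conv_lhs => rw [← Complex.norm_mul_exp_arg_mul_I q]
      rw [hce, mul_assoc, ← Complex.exp_add]; congr 2; push_cast; ring
    rw [e1, e2]; push_cast; ring
  rw [this, norm_mul, Complex.norm_exp_ofReal_mul_I, mul_one, Complex.norm_real, Real.norm_of_nonneg (by positivity)]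

lemma int_abs_cos (α : ℝ) : ∫ t in (0:ℝ)..(2 * Real.pi), |Real.cos (t - α)| = 4 := by
  have hper : Function.Periodic (fun t => |Real.cos t|) Real.pi := by
    intro t; simp [Real.cos_add_pi]
  have hc : Continuous (fun t => |Real.cos t|) := by fun_prop
  have h1 : ∫ t in (-(Real.pi/2))..(Real.pi/2), |Real.cos t| = 2 := by
    have : ∫ t in (-(Real.pi/2))..(Real.pi/2), |Real.cos t| = ∫ t in (-(Real.pi/2))..(Real.pi/2), Real.cos t := by
      apply intervalIntegral.integral_congr
      intro t ht
      rw [uIcc_of_le (by linarith [Real.pi_pos])] at ht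
      exact abs_of_nonneg (Real.cos_nonneg_of_mem_Icc ht)
    rw [this, integral_cos]; simp; norm_num
  have h2 : ∀ a : ℝ, ∫ t in a..(a + Real.pi), |Real.cos t| = 2 := by
    intro a
    rw [hper.intervalIntegral_add_eq a (-(Real.pi/2)), show -(Real.pi/2) + Real.pi = Real.pi/2 by ring, h1]
  rw [intervalIntegral.integral_comp_sub_right (fun t => |Real.cos t|) α,
    ← intervalIntegral.integral_add_adjacent_intervals (b := (0 - α) + Real.pi) (hc.intervalIntegrable _ _) (hc.intervalIntegrable _ _), h2]
  have := h2 (0 - α + Real.pi)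
  rw [show 2 * Real.pi - α = 0 - α + Real.pi + Real.pi by ring, this]; norm_num

lemma cauchy1 {h : ℂ → ℂ} (hh : DifferentiableOn ℂ h (ball 0 1)) {r : ℝ} (h0 : 0 < r) (h1 : r < 1) :
    ∫ t in (0:ℝ)..(2 * Real.pi), h (circleMap 0 r t) * Complex.exp (-(t * Complex.I)) =
      2 * Real.pi * r * deriv h 0 := by
  have hd : DiffContOnCl ℂ h (ball 0 r) := by
    apply DifferentiableOn.diffContOnCl
    rw [closure_ball _ h0.ne']
    exact hh.mono (closedBall_subset_ball h1)
  have := hd.deriv_eq_smul_circleIntegral h0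
  have hr : (r:ℂ) ≠ 0 := by exact_mod_cast h0.ne'
  have e : ∀ t : ℝ, h (circleMap 0 r t) * Complex.exp (-(t * Complex.I)) =
      (r / Complex.I) * (deriv (circleMap 0 r) t • ((1 / (circleMap 0 r t - 0) ^ 2) • h (circleMap 0 r t))) := by
    intro t
    rw [deriv_circleMap, Complex.exp_neg]
    have he := Complex.exp_ne_zero (t * Complex.I)
    simp only [circleMap, zero_add, smul_eq_mul, sub_zero]
    field_simp
  rw [circleIntegral] at this
  simp_rw [e]
  rw [intervalIntegral.integral_const_mul, this, smul_eq_mul]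
  field_simp

lemma cauchy2 {h : ℂ → ℂ} (hh : DifferentiableOn ℂ h (ball 0 1)) {r : ℝ} (h0 : 0 < r) (h1 : r < 1) :
    ∫ t in (0:ℝ)..(2 * Real.pi), h (circleMap 0 r t) * Complex.exp (t * Complex.I) = 0 := by
  have hd : DiffContOnCl ℂ h (ball 0 r) := by
    apply DifferentiableOn.diffContOnCl
    rw [closure_ball _ h0.ne']
    exact hh.mono (closedBall_subset_ball h1)
  have := hd.circleIntegral_eq_zero h0.le
  rw [circleIntegral] at this
  have hr : (r:ℂ) ≠ 0 := by exact_mod_cast h0.ne'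
  have e : ∀ t : ℝ, h (circleMap 0 r t) * Complex.exp (t * Complex.I) =
      (r * Complex.I)⁻¹ * (deriv (circleMap 0 r) t • h (circleMap 0 r t)) := by
    intro t
    rw [deriv_circleMap]
    simp only [circleMap, zero_add, smul_eq_mul]
    field_simp
  simp_rw [e]
  rw [intervalIntegral.integral_const_mul, this, mul_zero]

lemma integral_conj' (u : ℝ → ℂ) (a b : ℝ) :
    ∫ t in a..b, (starRingEnd ℂ) (u t) = (starRingEnd ℂ) (∫ t in a..b, u t) := by
  rw [intervalIntegral, intervalIntegral, integral_conj, integral_conj, map_sub]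

lemma norm_cos_id (e : ℂ) (t : ℝ) :
    ‖e * Complex.exp (-(t * Complex.I)) + (starRingEnd ℂ) e * Complex.exp (t * Complex.I)‖
      = 2 * ‖e‖ * |Real.cos (t - e.arg)| := by
  have h : e * Complex.exp (-(t * Complex.I)) + (starRingEnd ℂ) e * Complex.exp (t * Complex.I) =
      ((2 * ‖e‖ * Real.cos (t - e.arg) : ℝ) : ℂ) := by
    have h1 : (starRingEnd ℂ) e = ‖e‖ * Complex.exp (-(e.arg * Complex.I)) := by
      conv_lhs => rw [← Complex.norm_mul_exp_arg_mul_I e]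
      rw [map_mul, Complex.conj_ofReal, ← Complex.exp_conj, map_mul, Complex.conj_ofReal, Complex.conj_I]
      ring_nf
    rw [h1]
    conv_lhs => 
      arg 1
      rw [← Complex.norm_mul_exp_arg_mul_I e]
    rw [mul_assoc, mul_assoc, ← Complex.exp_add, ← Complex.exp_add]
    push_cast
    rw [Complex.cos]
    ring_nf
  rw [h, Complex.norm_real, Real.norm_eq_abs, abs_mul, abs_of_nonneg (by positivity : 0 ≤ 2 * ‖e‖)]

lemma harm_bound {a b P : ℂ → ℂ} (ha : DifferentiableOn ℂ a (ball 0 1))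
    (hb : DifferentiableOn ℂ b (ball 0 1))
    (hP : ∀ z ∈ ball (0:ℂ) 1, P z = a z + (starRingEnd ℂ) (b z)) {M : ℝ} 
    (hM : ∀ z ∈ ball (0:ℂ) 1, ‖P z‖ ≤ M) :
    ∃ L : ℂ →L[ℝ] ℂ, HasFDerivAt P L 0 ∧ ‖L‖ ≤ 4 / Real.pi * M := by
  have h0m : (0:ℂ) ∈ ball (0:ℂ) 1 := by simp
  have hM0 : 0 ≤ M := (norm_nonneg _).trans (hM 0 h0m)
  have hn : ball (0:ℂ) 1 ∈ nhds (0:ℂ) := isOpen_ball.mem_nhds h0m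
  have da := ((ha.differentiableAt hn).hasDerivAt.hasFDerivAt).restrictScalars ℝ
  have db := ((hb.differentiableAt hn).hasDerivAt.hasFDerivAt).restrictScalars ℝ
  have dcb := (Complex.conjCLE.toContinuousLinearMap.hasFDerivAt (x := b 0)).comp (0:ℂ) db
  have dP := da.add dcb
  refine ⟨_, dP.congr_of_eventuallyEq (by filter_upwards [hn] with z hz; simpa using hP z hz), ?_⟩
  apply ContinuousLinearMap.opNorm_le_bound _ (by positivity)
  intro e
  set v := deriv a 0 * e + (starRingEnd ℂ) (deriv b 0 * e) with hv
  have hLe : ∀ L : ℂ →L[ℝ] ℂ, L e = v → ‖v‖ ≤ 4 / Real.pi * M * ‖e‖ → ‖L e‖ ≤ 4 / Real.pi * M * ‖e‖ := by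
    intro L h h'; rwa [h]
  apply hLe
  · simp [hv, mul_comm]
  have hr : ∀ r : ℝ, 0 < r → r < 1 → r * ‖v‖ ≤ 4 / Real.pi * M * ‖e‖ := by
    intro r h0 h1
    have hmem : ∀ t : ℝ, circleMap 0 r t ∈ ball (0:ℂ) 1 := by
      intro t; simp [circleMap, abs_of_pos h0, h1]
    have hcm : Continuous (fun t => circleMap 0 r t) := continuous_circleMap 0 r
    have ca : Continuous (fun t => a (circleMap 0 r t)) := 
      ha.continuousOn.comp_continuous hcm hmem
    have cb : Continuous (fun t => b (circleMap 0 r t)) := 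
      hb.continuousOn.comp_continuous hcm hmem
    have cP : Continuous (fun t => P (circleMap 0 r t)) := by
      have : (fun t => P (circleMap 0 r t)) = fun t => a (circleMap 0 r t) + (starRingEnd ℂ) (b (circleMap 0 r t)) := by
        ext t; exact hP _ (hmem t)
      rw [this]; exact ca.add (Complex.continuous_conj.comp cb)
    have c1 : Continuous (fun t : ℝ => Complex.exp (-(t * Complex.I))) := by fun_prop
    have c2 : Continuous (fun t : ℝ => Complex.exp (t * Complex.I)) := by fun_prop
    have key : ∫ t in (0:ℝ)..(2 * Real.pi), P (circleMap 0 r t) * (e * Complex.exp (-(t * Complex.I)) + (starRingEnd ℂ) e * Complex.exp (t * Complex.I)) = 2 * Real.pi * r * v := by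
      have e1 : ∀ t : ℝ, P (circleMap 0 r t) * (e * Complex.exp (-(t * Complex.I)) + (starRingEnd ℂ) e * Complex.exp (t * Complex.I)) =
        (e * (a (circleMap 0 r t) * Complex.exp (-(t * Complex.I))) + (starRingEnd ℂ) e * (a (circleMap 0 r t) * Complex.exp (t * Complex.I)))
        + (starRingEnd ℂ) (((starRingEnd ℂ) e * (b (circleMap 0 r t) * Complex.exp (t * Complex.I))) + e * (b (circleMap 0 r t) * Complex.exp (-(t * Complex.I)))) := by
        intro t
        rw [hP _ (hmem t)]
        simp only [map_add, map_mul, ← Complex.exp_conj, map_neg, Complex.conj_ofReal, Complex.conj_I, Complex.conj_conj]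
        simp only [mul_neg, neg_neg]
        ring
      simp_rw [e1]
      rw [intervalIntegral.integral_add, integral_conj', intervalIntegral.integral_add, intervalIntegral.integral_add]
      · simp only [intervalIntegral.integral_const_mul, cauchy1 ha h0 h1, cauchy1 hb h0 h1, cauchy2 ha h0 h1, cauchy2 hb h0 h1, hv, map_mul, Complex.conj_ofReal, map_ofNat, mul_zero, zero_add, add_zero]
        ring
      all_goals 
        apply Continuous.intervalIntegrable
        first
        | exact continuous_const.mul (ca.mul c1)
        | exact continuous_const.mul (ca.mul c2)
        | exact continuous_const.mul (cb.mul c1)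
        | exact continuous_const.mul (cb.mul c2)
        | exact (continuous_const.mul (ca.mul c1)).add (continuous_const.mul (ca.mul c2))
        | exact Complex.continuous_conj.comp ((continuous_const.mul (cb.mul c2)).add (continuous_const.mul (cb.mul c1)))
    have hb1 : ‖∫ t in (0:ℝ)..(2 * Real.pi), P (circleMap 0 r t) * (e * Complex.exp (-(t * Complex.I)) + (starRingEnd ℂ) e * Complex.exp (t * Complex.I))‖ ≤ ∫ t in (0:ℝ)..(2 * Real.pi), M * (2 * ‖e‖) * |Real.cos (t - e.arg)| := by
      apply intervalIntegral.norm_integral_le_of_norm_le (by positivity)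
      · refine ae_of_all _ fun t _ => ?_
        rw [norm_mul, norm_cos_id, mul_assoc M]
        exact mul_le_mul_of_nonneg_right (hM _ (hmem t)) (by positivity)
      · apply Continuous.intervalIntegrable
        fun_prop
    rw [key, intervalIntegral.integral_const_mul, int_abs_cos, norm_mul] at hb1
    have : ‖(2 * Real.pi * r : ℂ)‖ = 2 * Real.pi * r := by
      simp [abs_of_pos h0, abs_of_pos Real.pi_pos]
    rw [this] at hb1
    have hpi := Real.pi_pos
    rw [div_mul_eq_mul_div, div_mul_eq_mul_div, le_div_iff₀ hpi]
    nlinarith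
  by_contra! hcon
  set K := 4 / Real.pi * M * ‖e‖ with hK
  have hK0 : 0 ≤ K := by positivity
  have hv0 : 0 < ‖v‖ := lt_of_le_of_lt hK0 hcon
  have h1 : K / ‖v‖ < 1 := by rwa [div_lt_one hv0]
  have h2 : 0 ≤ K / ‖v‖ := by positivity
  have h3 := hr ((K / ‖v‖ + 1) / 2) (by linarith) (by linarith)
  have h4 : K / ‖v‖ * ‖v‖ = K := by field_simp
  nlinarith

def cauT (ψ : ℂ → ℂ) (z : ℂ) : ℂ := (2 * Real.pi * Complex.I : ℂ)⁻¹ • circleIntegral (fun ζ => (ζ - z)⁻¹ • ψ ζ) 0 1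

lemma cauT_diff {ψ : ℂ → ℂ} (h : CircleIntegrable ψ 0 1) : DifferentiableOn ℂ (cauT ψ) (ball 0 1) := by
  have := (hasFPowerSeriesOn_cauchy_integral (R := 1) (by simpa using h) one_pos).differentiableOn
  have h2 : Metric.eball (0:ℂ) ((1 : NNReal) : ENNReal) = ball 0 1 := by rw [Metric.eball_coe]; simp
  rw [h2] at this
  exact this

lemma one_sub_ne {z : ℂ} (hz : z ∈ ball (0:ℂ) 1) (t : ℝ) : 1 - z * Complex.exp (-(Complex.I * t)) ≠ 0 := by
  intro h
  have h1 : ‖z * Complex.exp (-(Complex.I * t))‖ = ‖z‖ := by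
    rw [norm_mul, show -(Complex.I * (t:ℂ)) = ((-t : ℝ) : ℂ) * Complex.I by push_cast; ring, Complex.norm_exp_ofReal_mul_I, mul_one]
  rw [← sub_eq_zero.mp h] at h1
  simp at h1 hz
  linarith

lemma cauT_eq (ψ : ℂ → ℂ) {z : ℂ} (hz : z ∈ ball (0:ℂ) 1) : cauT ψ z = (2 * Real.pi : ℂ)⁻¹ * 
    ∫ t in (0:ℝ)..(2 * Real.pi), (1 - z * Complex.exp (-(Complex.I * t)))⁻¹ * ψ (Complex.exp (Complex.I * t)) := by
  rw [cauT, circleIntegral, smul_eq_mul, ← intervalIntegral.integral_const_mul, ← intervalIntegral.integral_const_mul]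
  congr 1; ext t
  rw [deriv_circleMap]
  have hne := one_sub_ne hz t
  rw [Complex.exp_neg] at hne ⊢
  have he := Complex.exp_ne_zero (Complex.I * t)
  simp only [circleMap, zero_add, smul_eq_mul, Complex.ofReal_one, one_mul]
  rw [mul_comm (t:ℂ) Complex.I]
  set E := Complex.exp (Complex.I * t)
  have h1 : E - z = E * (1 - z * E⁻¹) := by field_simp
  rw [h1]
  have hpi : (Real.pi:ℂ) ≠ 0 := by exact_mod_cast Real.pi_ne_zero
  field_simp

lemma kernel_id {x : ℂ} (hx : 1 - x ≠ 0) : (((1 - ‖x‖^2) / ‖1 - x‖^2 : ℝ) : ℂ) = 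
    (1 - x)⁻¹ + (starRingEnd ℂ) (1 - x)⁻¹ - 1 := by
  have h2 : (starRingEnd ℂ) (1 - x) ≠ 0 := by rwa [Ne, map_eq_zero]
  push_cast
  rw [← Complex.mul_conj', ← Complex.mul_conj', map_inv₀]
  field_simp
  simp
  ring

lemma poisson_eq {ψ : ℂ → ℂ} (h : CircleIntegrable ψ 0 1) {z : ℂ} (hz : z ∈ ball (0:ℂ) 1) :
    poissonIntegral ψ z = cauT ψ z + (starRingEnd ℂ) (cauT (fun ζ => (starRingEnd ℂ) (ψ ζ)) z - cauT (fun ζ => (starRingEnd ℂ) (ψ ζ)) 0) := by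
  have h' : IntervalIntegrable (fun t : ℝ => ψ (Complex.exp (Complex.I * t))) volume 0 (2 * Real.pi) := by
    have := h
    rw [circleIntegrable_def] at this
    simpa [circleMap, mul_comm] using this
  have hk : Continuous (fun t : ℝ => (1 - z * Complex.exp (-(Complex.I * t)))⁻¹) := by
    apply Continuous.inv₀ (by fun_prop) (one_sub_ne hz)
  rw [cauT_eq _ hz, cauT_eq _ hz, cauT_eq _ (by simp : (0:ℂ) ∈ ball (0:ℂ) 1), poissonIntegral]
  rw [map_sub, map_mul, map_mul, ← integral_conj', ← integral_conj']
  have hpp : (starRingEnd ℂ) (2 * Real.pi : ℂ)⁻¹ = (2 * Real.pi : ℂ)⁻¹ := by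
    rw [map_inv₀, map_mul, Complex.conj_ofReal, map_ofNat]
  rw [hpp, ← mul_sub, ← mul_add, ← intervalIntegral.integral_sub, ← intervalIntegral.integral_add]
  · rw [Complex.real_smul]
    congr 1
    · push_cast; simp
    congr 1; ext t
    have hx := one_sub_ne hz t
    have hn : ‖z * Complex.exp (-(Complex.I * t))‖ = ‖z‖ := by
      rw [norm_mul, show -(Complex.I * (t:ℂ)) = ((-t : ℝ) : ℂ) * Complex.I by push_cast; ring, Complex.norm_exp_ofReal_mul_I, mul_one]
    have := kernel_id hx
    rw [hn] at this
    rw [this, map_mul, map_mul, Complex.conj_conj]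
    simp
    ring
  · exact h'.continuousOn_mul hk.continuousOn
  · simp only [map_mul, Complex.conj_conj]
    apply IntervalIntegrable.sub
    · exact h'.continuousOn_mul (Complex.continuous_conj.comp hk).continuousOn
    · simpa using h'
  · simp only [map_mul, Complex.conj_conj]
    exact h'.continuousOn_mul (Complex.continuous_conj.comp hk).continuousOn
  · simpa using h'

lemma cauT_one {z : ℂ} (hz : z ∈ ball (0:ℂ) 1) : cauT (fun _ => 1) z = 1 := by
  rw [cauT]
  simp only [smul_eq_mul, mul_one]
  rw [circleIntegral.integral_sub_inv_of_mem_ball hz]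
  have hpi : (Real.pi:ℂ) ≠ 0 := by exact_mod_cast Real.pi_ne_zero
  have := Complex.I_ne_zero
  field_simp

lemma poisson_one {z : ℂ} (hz : z ∈ ball (0:ℂ) 1) : (1 / (2 * Real.pi)) * ∫ t in (0:ℝ)..(2 * Real.pi),
    ((1 - ‖z‖ ^ 2) / ‖1 - z * Complex.exp (-(Complex.I * (t : ℂ)))‖ ^ 2 : ℝ) = 1 := by
  have h := poisson_eq (ψ := fun _ => 1) (circleIntegrable_const 1 0 1) hz
  simp only [map_one] at h
  rw [cauT_one hz, cauT_one (by simp : (0:ℂ) ∈ ball (0:ℂ) 1), poissonIntegral] at h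
  simp only [mul_one] at h
  rw [intervalIntegral.integral_ofReal, Complex.real_smul, ← Complex.ofReal_mul] at h
  simp only [sub_self, map_zero, add_zero] at h
  exact_mod_cast h

lemma poisson_bdd {ψ : ℂ → ℂ} {C : ℝ} (hC : ∀ ζ ∈ sphere (0:ℂ) 1, ‖ψ ζ‖ ≤ C) {z : ℂ} (hz : z ∈ ball (0:ℂ) 1) :
    ‖poissonIntegral ψ z‖ ≤ C := by
  have hz1 : ‖z‖ < 1 := by simpa using hz
  have hp := Real.pi_pos
  have hcont : Continuous fun t : ℝ => ((1 - ‖z‖ ^ 2) / ‖1 - z * Complex.exp (-(Complex.I * (t : ℂ)))‖ ^ 2 : ℝ) := by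
    apply Continuous.div (by fun_prop) (by fun_prop)
    intro t
    have := one_sub_ne hz t
    positivity
  have key : ‖∫ t in (0:ℝ)..(2 * Real.pi),
    (((1 - ‖z‖ ^ 2) / ‖1 - z * Complex.exp (-(Complex.I * (t : ℂ)))‖ ^ 2 : ℝ) : ℂ) *
      ψ (Complex.exp (Complex.I * (t : ℂ)))‖ ≤ ∫ t in (0:ℝ)..(2 * Real.pi),
    ((1 - ‖z‖ ^ 2) / ‖1 - z * Complex.exp (-(Complex.I * (t : ℂ)))‖ ^ 2 : ℝ) * C := by
    apply intervalIntegral.norm_integral_le_of_norm_le (by positivity)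
    · refine ae_of_all _ fun t _ => ?_
      have h0 : 0 ≤ ((1 - ‖z‖ ^ 2) / ‖1 - z * Complex.exp (-(Complex.I * (t : ℂ)))‖ ^ 2 : ℝ) := by
        apply div_nonneg _ (by positivity)
        nlinarith [norm_nonneg z]
      rw [norm_mul, Complex.norm_real, Real.norm_of_nonneg h0]
      apply mul_le_mul_of_nonneg_left _ h0
      apply hC
      simp [Complex.norm_exp]
    · exact (hcont.mul continuous_const).intervalIntegrable _ _
  rw [intervalIntegral.integral_mul_const] at key
  rw [poissonIntegral, norm_smul, Real.norm_of_nonneg (by positivity)]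
  calc _ ≤ 1 / (2 * Real.pi) * _ := mul_le_mul_of_nonneg_left key (by positivity)
    _ = C := by rw [← mul_assoc, poisson_one hz, one_mul]

/-- comparison function -/
def FF (s : ℝ) (v : ℂ) : ℝ := (Iio (1 + s)).indicator (fun y => (1 - (y - s)^2) / y) ‖v‖

lemma FF_aux (s : ℝ) (y : ℝ) (hy : y ∈ Ioi (0:ℝ)) : y ^ (Module.finrank ℝ ℂ - 1) • (Iio (1 + s)).indicator (fun y => (1 - (y - s)^2) / y) y = (Iio (1+s)).indicator (fun y => 1 - (y - s)^2) y := by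
  rw [Complex.finrank_real_complex]
  have : y ≠ 0 := ne_of_gt hy
  by_cases h : y < 1 + s
  · simp [h]; field_simp
  · simp [h]

lemma FF_integrable (s : ℝ) (hs : 0 ≤ s) : Integrable (FF s) := by
  have := (integrable_fun_norm_addHaar (volume : Measure ℂ) (f := (Iio (1 + s)).indicator (fun y => (1 - (y - s)^2) / y))).2
  apply this
  rw [integrableOn_congr_fun (FF_aux s) measurableSet_Ioi]
  rw [integrableOn_indicator_iff measurableSet_Iio, inter_comm, Ioi_inter_Iio]
  have hc : Continuous (fun y : ℝ => 1 - (y - s)^2) := by fun_prop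
  exact (hc.integrableOn_Icc (a := 0) (b := 1 + s)).mono_set Ioo_subset_Icc_self

lemma FF_integral (s : ℝ) (hs : 0 ≤ s) : ∫ v, FF s v = 2 * Real.pi * ((1 + s) - (1 + s^3)/3) := by
  have := (integral_fun_norm_addHaar (volume : Measure ℂ) (f := (Iio (1 + s)).indicator (fun y => (1 - (y - s)^2) / y)))
  rw [setIntegral_congr_fun measurableSet_Ioi (FF_aux s), setIntegral_indicator measurableSet_Iio, Ioi_inter_Iio, ← integral_Ioc_eq_integral_Ioo, ← intervalIntegral.integral_of_le (by linarith)] at this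
  have h2 : (volume : Measure ℂ).real (ball 0 1) = Real.pi := by
    simp [Measure.real, Complex.volume_ball]
  have h3 : ∫ y in (0:ℝ)..(1 + s), (1 - (y - s)^2) = (1 + s) - (1 + s^3)/3 := by
    rw [intervalIntegral.integral_sub (by simp) (by apply Continuous.intervalIntegrable; fun_prop)]
    rw [intervalIntegral.integral_comp_sub_right (fun y => y^2) s, integral_pow]
    simp; ring
  rw [h2, h3, Complex.finrank_real_complex] at this
  simp only [FF]
  rw [this]; simp; ring

lemma log_lem {p q : ℝ} (hp : 0 < p) (hq : 0 < q) : |Real.log p - Real.log q| * (√p * √q) ≤ |p - q| := by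
  wlog h : q ≤ p generalizing p q
  · have := this hq hp (le_of_not_ge h)
    rwa [abs_sub_comm, abs_sub_comm q p, mul_comm √q] at this
  have hl : Real.log q ≤ Real.log p := Real.log_le_log hq h
  rw [abs_of_nonneg (by linarith), abs_of_nonneg (by linarith)]
  have h1 : (Real.log p - Real.log q) / 2 ≤ Real.sinh ((Real.log p - Real.log q) / 2) :=
    Real.self_le_sinh_iff.2 (by linarith)
  have hsp := Real.sqrt_pos.2 hp
  have hsq := Real.sqrt_pos.2 hq
  have h2 : Real.exp ((Real.log p - Real.log q) / 2) = √p / √q := by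
    rw [sub_div, Real.exp_sub, ← Real.log_sqrt hp.le, ← Real.log_sqrt hq.le, Real.exp_log hsp, Real.exp_log hsq]
  rw [Real.sinh_eq, Real.exp_neg, h2, inv_div] at h1
  calc _ ≤ (√p / √q - √q / √p) * (√p * √q) := by
        apply mul_le_mul_of_nonneg_right _ (by positivity); linarith
    _ = √p ^ 2 - √q ^ 2 := by field_simp
    _ = p - q := by rw [Real.sq_sqrt hp.le, Real.sq_sqrt hq.le]

/-- Green kernel -/
def gk (z w : ℂ) : ℝ := Real.log ‖(1 - z * (starRingEnd ℂ) w) / (z - w)‖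

lemma gk_meas (z : ℂ) : Measurable (gk z) := by
  unfold gk
  apply Real.measurable_log.comp
  apply Measurable.norm
  apply Measurable.div
  · exact Continuous.measurable (by fun_prop)
  · fun_prop

lemma FF_nonneg (s : ℝ) (hs : 0 ≤ s) (v : ℂ) (hv : s - 1 ≤ ‖v‖) : 0 ≤ FF s v := by
  rw [FF]
  by_cases h : ‖v‖ < 1 + s
  · simp only [mem_Iio, h, indicator_of_mem]
    apply div_nonneg _ (norm_nonneg _)
    nlinarith
  · simp [h]

lemma FF_ge {z w : ℂ} (hw : ‖w‖ < 1) : (1 - ‖w‖^2) / ‖w - z‖ ≤ FF ‖z‖ (w - z) := by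
  have h1 : ‖w - z‖ < 1 + ‖z‖ := by linarith [norm_sub_le w z]
  rw [FF, indicator_of_mem (by exact h1)]
  apply div_le_div_of_nonneg_right _ (norm_nonneg _)
  have h2 : |‖w - z‖ - ‖z‖| ≤ ‖w‖ := by
    rw [abs_le]; constructor
    · have := norm_sub_norm_le z w
      rw [norm_sub_rev] at this; linarith
    · linarith [norm_sub_le w z]
  have := sq_le_sq' (by linarith [abs_le.1 h2]) (abs_le.1 h2).2
  linarith

lemma gk0_le {w : ℂ} (hw : ‖w‖ < 1) (h0 : w ≠ 0) : |gk 0 w| ≤ FF 0 w := by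
  have hp : 0 < ‖w‖ := norm_pos_iff.2 h0
  have h1 := log_lem (p := 1) (q := ‖w‖^2) one_pos (by positivity)
  have h2 := FF_ge (z := 0) hw
  simp only [norm_zero, sub_zero] at h2
  refine le_trans ?_ h2
  have h3 : gk 0 w = - Real.log ‖w‖ := by simp [gk, Real.log_inv]
  rw [Real.log_one, Real.log_pow, Real.sqrt_one, Real.sqrt_sq hp.le, abs_of_nonneg (a := 1 - ‖w‖^2) (by nlinarith)] at h1
  have hl := Real.log_nonpos hp.le hw.le
  rw [h3, abs_of_nonneg (by linarith), le_div_iff₀ hp]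
  push_cast at h1
  rw [abs_of_nonneg (by linarith)] at h1
  nlinarith

lemma gk_diff {z w : ℂ} (hz : ‖z‖ < 1) (hw : ‖w‖ < 1) (h0 : w ≠ 0) (hwz : w ≠ z) :
    |gk z w - gk 0 w| ≤ ‖z‖ / (1 - ‖z‖) * ((FF 0 w + FF ‖z‖ (w - z)) / 2) := by
  have hp : 0 < ‖w‖ := norm_pos_iff.2 h0
  have hq : 0 < ‖w - z‖ := norm_pos_iff.2 (sub_ne_zero.2 hwz)
  have hc : 1 - ‖z‖ ≤ ‖1 - z * (starRingEnd ℂ) w‖ := by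
    have := norm_sub_norm_le 1 (z * (starRingEnd ℂ) w)
    rw [norm_mul, Complex.norm_conj, norm_one] at this
    nlinarith [norm_nonneg z]
  have hc0 : 0 < 1 - ‖z‖ := by linarith
  have hd : 0 < ‖1 - z * (starRingEnd ℂ) w‖ := by linarith
  have hfz : (1 - ‖w‖^2) / ‖w - z‖ ≤ FF ‖z‖ (w - z) := FF_ge hw
  have hf0 : (1 - ‖w‖^2) / ‖w‖ ≤ FF 0 w := by simpa using FF_ge (z := 0) hw
  have e : gk z w - gk 0 w = Real.log (‖1 - z * (starRingEnd ℂ) w‖ * ‖w‖) - Real.log ‖w - z‖ := by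
    have h3 : gk 0 w = - Real.log ‖w‖ := by simp [gk, Real.log_inv]
    rw [h3, gk, norm_div, norm_sub_rev z w, Real.log_div hd.ne' hq.ne', Real.log_mul hd.ne' hp.ne']
    ring
  have hN0 : 0 ≤ 1 - ‖w‖^2 := by nlinarith
  have hN : |‖1 - z * (starRingEnd ℂ) w‖ * ‖w‖ - ‖w - z‖| ≤ ‖z‖ * (1 - ‖w‖^2) := by
    rw [← norm_mul]
    refine (abs_norm_sub_norm_le _ _).trans (le_of_eq ?_)
    have : (1 - z * (starRingEnd ℂ) w) * w - (w - z) = z * ((1 - ‖w‖^2 : ℝ) : ℂ) := by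
      push_cast
      rw [← Complex.conj_mul']; ring
    rw [this, norm_mul, Complex.norm_real, Real.norm_of_nonneg hN0]
  have hl := (log_lem (mul_pos hd hp) hq).trans hN
  rw [← e, Real.sqrt_mul hd.le] at hl
  set D := |gk z w - gk 0 w| with hD
  have hD0 : 0 ≤ D := abs_nonneg _
  have hZ : 1 - ‖z‖ ≤ √‖1 - z * (starRingEnd ℂ) w‖ := by
    apply Real.le_sqrt_of_sq_le
    nlinarith [norm_nonneg z]
  have hX := Real.sqrt_pos.2 hp
  have hY := Real.sqrt_pos.2 hq
  have hXs := Real.sq_sqrt hp.le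
  have hYs := Real.sq_sqrt hq.le
  set X := √‖w‖
  set Y := √‖w - z‖
  have h1 : D * ((1 - ‖z‖) * (X * Y)) ≤ ‖z‖ * (1 - ‖w‖^2) := by
    refine le_trans ?_ hl
    rw [mul_assoc]
    gcongr
  have h2 : D ≤ ‖z‖ / (1 - ‖z‖) * ((1 - ‖w‖^2) * (1 / (X * Y))) := by
    rw [show ‖z‖ / (1 - ‖z‖) * ((1 - ‖w‖^2) * (1 / (X * Y))) = ‖z‖ * (1 - ‖w‖^2) / ((1 - ‖z‖) * (X * Y)) by field_simp]
    rwa [le_div_iff₀ (by positivity)]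
  refine h2.trans ?_
  apply mul_le_mul_of_nonneg_left _ (by positivity)
  have h3 : 1 / (X * Y) ≤ (1 / ‖w‖ + 1 / ‖w - z‖) / 2 := by
    rw [← hXs, ← hYs]
    have := sq_nonneg (1 / X - 1 / Y)
    have e1 : 1 / (X * Y) = (1 / X) * (1 / Y) := by field_simp
    have e2 : 1 / X^2 = (1 / X)^2 := by field_simp
    have e3 : 1 / Y^2 = (1 / Y)^2 := by field_simp
    rw [e1, e2, e3]; linarith
  calc _ ≤ (1 - ‖w‖^2) * ((1 / ‖w‖ + 1 / ‖w - z‖) / 2) := mul_le_mul_of_nonneg_left h3 hN0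
    _ = ((1 - ‖w‖^2) / ‖w‖ + (1 - ‖w‖^2) / ‖w - z‖) / 2 := by ring
    _ ≤ _ := by linarith

lemma green_lip {g : ℂ → ℂ} (hg : ContinuousOn g (closedBall (0:ℂ) 1)) {M : ℝ}
    (hM : ∀ z ∈ ball (0:ℂ) 1, ‖g z‖ ≤ M) {z : ℂ} (hz : ‖z‖ < 1) :
    ‖greenPotential g z - greenPotential g 0‖ ≤ M * ((2/3 + ‖z‖) / (1 - ‖z‖)) * ‖z‖ := by
  have hM0 : 0 ≤ M := (norm_nonneg _).trans (hM 0 (by simp))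
  set μ := (volume : Measure ℂ).restrict (ball 0 1) with hμ
  have hgm : AEStronglyMeasurable g μ :=
    (hg.mono ball_subset_closedBall).aestronglyMeasurable measurableSet_ball
  have hin : ∀ᵐ w ∂μ, w ∈ ball (0:ℂ) 1 := ae_restrict_mem measurableSet_ball
  have hne : ∀ a : ℂ, ∀ᵐ w ∂μ, w ≠ a := fun a => ae_restrict_of_ae (Measure.ae_ne volume a)
  have I0 : Integrable (FF 0) := FF_integrable 0 le_rfl
  have Iz : Integrable (fun w => FF ‖z‖ (w - z)) := (FF_integrable ‖z‖ (norm_nonneg _)).comp_sub_right z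
  have mk : ∀ a, AEStronglyMeasurable (fun w => (gk a w : ℂ)) μ := fun a =>
    (Complex.measurable_ofReal.comp (gk_meas a)).aestronglyMeasurable
  set H : ℂ → ℝ := fun w => ‖z‖ / (1 - ‖z‖) * ((FF 0 w + FF ‖z‖ (w - z)) / 2) with hH
  have IH : Integrable H := ((I0.add Iz).div_const 2).const_mul _
  have IG0 : Integrable (fun w => (gk 0 w : ℂ) * g w) μ := by
    refine Integrable.mono' (g := fun w => FF 0 w * M) (I0.integrableOn.mul_const M) ((mk 0).mul hgm) ?_
    filter_upwards [hin, hne 0] with w hw hw0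
    rw [norm_mul, Complex.norm_real, Real.norm_eq_abs]
    have := gk0_le (by simpa using hw) hw0
    exact mul_le_mul this (hM w hw) (norm_nonneg _) ((abs_nonneg _).trans this)
  have hbd : ∀ᵐ w ∂μ, ‖(gk z w : ℂ) * g w - (gk 0 w : ℂ) * g w‖ ≤ H w * M := by
    filter_upwards [hin, hne 0, hne z] with w hw hw0 hwz
    rw [← sub_mul, norm_mul, ← Complex.ofReal_sub, Complex.norm_real, Real.norm_eq_abs]
    have := gk_diff hz (by simpa using hw) hw0 hwz
    exact mul_le_mul this (hM w hw) (norm_nonneg _) ((abs_nonneg _).trans this)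
  have ID : Integrable (fun w => (gk z w : ℂ) * g w - (gk 0 w : ℂ) * g w) μ :=
    Integrable.mono' (g := fun w => H w * M) (IH.integrableOn.mul_const M) (((mk z).mul hgm).sub ((mk 0).mul hgm)) hbd
  have IGz : Integrable (fun w => (gk z w : ℂ) * g w) μ := by
    have := ID.add IG0
    refine this.congr (ae_of_all _ fun w => ?_)
    simp
  have e : greenPotential g z - greenPotential g 0 = (1 / (2 * Real.pi) : ℝ) • ∫ w, ((gk z w : ℂ) * g w - (gk 0 w : ℂ) * g w) ∂μ := by
    rw [integral_sub IGz IG0, smul_sub]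
    rfl
  have hpi := Real.pi_pos
  have hc0 : 0 < 1 - ‖z‖ := by linarith
  have hFFnn : ∀ w, 0 ≤ H w := by
    intro w
    have h1 := FF_nonneg 0 le_rfl w (by linarith [norm_nonneg w])
    have h2 := FF_nonneg ‖z‖ (norm_nonneg z) (w - z) (by linarith [norm_nonneg (w - z)])
    exact mul_nonneg (by positivity) (by positivity)
  have b1 : ‖∫ w, ((gk z w : ℂ) * g w - (gk 0 w : ℂ) * g w) ∂μ‖ ≤ (∫ w, H w) * M := by
    calc _ ≤ ∫ w, H w * M ∂μ := norm_integral_le_of_norm_le (IH.integrableOn.mul_const M) hbd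
      _ = (∫ w, H w ∂μ) * M := integral_mul_const _ _
      _ ≤ _ := mul_le_mul_of_nonneg_right (setIntegral_le_integral IH (ae_of_all _ hFFnn)) hM0
  have b2 : ∫ w, H w = ‖z‖ / (1 - ‖z‖) * ((2 * Real.pi * (2/3) + 2 * Real.pi * ((1 + ‖z‖) - (1 + ‖z‖^3)/3)) / 2) := by
    rw [hH, integral_const_mul, integral_div, integral_add I0 Iz, integral_sub_right_eq_self (FF ‖z‖) z, FF_integral _ (norm_nonneg z), FF_integral 0 le_rfl]
    norm_num
  rw [e, norm_smul, Real.norm_of_nonneg (by positivity)]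
  refine (mul_le_mul_of_nonneg_left b1 (by positivity)).trans ?_
  rw [b2]
  have e2 : 1 / (2 * Real.pi) * (‖z‖ / (1 - ‖z‖) * ((2 * Real.pi * (2/3) + 2 * Real.pi * ((1 + ‖z‖) - (1 + ‖z‖^3)/3)) / 2) * M) = M * ‖z‖ / (1 - ‖z‖) * (2/3 + ‖z‖ / 2 - ‖z‖^3 / 6) := by
    field_simp; ring
  have e3 : M * ((2/3 + ‖z‖) / (1 - ‖z‖)) * ‖z‖ = M * ‖z‖ / (1 - ‖z‖) * (2/3 + ‖z‖) := by field_simp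
  rw [e2, e3]
  apply mul_le_mul_of_nonneg_left _ (by positivity)
  have := pow_nonneg (norm_nonneg z) 3
  linarith [norm_nonneg z]

/-- Schwarz–Pick type estimate at the origin for solutions of the Poisson equation. -/
theorem stmt4 (g ψ f : ℂ → ℂ)
    (hg : ContinuousOn g (closedBall (0:ℂ) 1))
    (hψint : IntervalIntegrable (fun t : ℝ => ψ (Complex.exp (Complex.I * (t : ℂ))))
      MeasureTheory.volume 0 (2 * Real.pi))
    (hψbdd : ∃ C : ℝ, ∀ ζ ∈ sphere (0:ℂ) 1, ‖ψ ζ‖ ≤ C)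
    (hf : ∀ z ∈ ball (0:ℂ) 1, f z = poissonIntegral ψ z - greenPotential g z) :
    ‖wdz f 0‖ + ‖wdzbar f 0‖ ≤
      4 / Real.pi * supD (poissonIntegral ψ) + 2 / 3 * supD g := by
  have hn : ball (0:ℂ) 1 ∈ nhds (0:ℂ) := isOpen_ball.mem_nhds (by simp)
  obtain ⟨C, hC⟩ := hψbdd
  have supnn : ∀ h : ℂ → ℂ, 0 ≤ supD h := by
    intro h
    apply Real.sSup_nonneg
    rintro _ ⟨w, _, rfl⟩
    exact norm_nonneg _
  have hMP : ∀ z ∈ ball (0:ℂ) 1, ‖poissonIntegral ψ z‖ ≤ supD (poissonIntegral ψ) := by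
    intro z hz
    apply le_csSup
    · refine ⟨C, ?_⟩
      rintro _ ⟨w, hw, rfl⟩
      exact poisson_bdd hC hw
    · exact ⟨z, hz, rfl⟩
  have hMg : ∀ z ∈ ball (0:ℂ) 1, ‖g z‖ ≤ supD g := by
    intro z hz
    obtain ⟨B, hB⟩ := (isCompact_closedBall (0:ℂ) 1).exists_bound_of_continuousOn hg
    apply le_csSup
    · refine ⟨B, ?_⟩
      rintro _ ⟨w, hw, rfl⟩
      exact hB w (ball_subset_closedBall hw)
    · exact ⟨z, hz, rfl⟩
  refine (wirt_le f 0).trans ?_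
  by_cases hdf : DifferentiableAt ℝ f 0
  swap
  · rw [fderiv_zero_of_not_differentiableAt hdf, norm_zero]
    have := supnn (poissonIntegral ψ)
    have := supnn g
    have := Real.pi_pos
    positivity
  have hci : CircleIntegrable ψ 0 1 := by
    rw [circleIntegrable_def]
    simpa [circleMap, mul_comm] using hψint
  have hci' : CircleIntegrable (fun ζ => (starRingEnd ℂ) (ψ ζ)) 0 1 := by
    rw [circleIntegrable_def] at hci ⊢
    rw [intervalIntegrable_iff] at hci ⊢
    exact Complex.conjCLE.toContinuousLinearMap.integrable_comp hci
  obtain ⟨L, hL, hLb⟩ := harm_bound (cauT_diff hci) ((cauT_diff hci').sub_const _)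
    (fun z hz => poisson_eq hci hz) hMP
  have hG : HasFDerivAt (greenPotential g) (L - fderiv ℝ f 0) 0 := by
    refine (hL.sub hdf.hasFDerivAt).congr_of_eventuallyEq ?_
    filter_upwards [hn] with z hz
    simp [hf z hz]
  have hGb : ‖L - fderiv ℝ f 0‖ ≤ 2 / 3 * supD g := by
    apply le_of_forall_pos_le_add
    intro ε hε
    apply hG.le_of_lip' (by have := supnn g; positivity)
    have hcont : ContinuousAt (fun z : ℂ => supD g * ((2/3 + ‖z‖) / (1 - ‖z‖))) 0 := by
      apply ContinuousAt.mul continuousAt_const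
      apply ContinuousAt.div (by fun_prop) (by fun_prop) (by simp)
    have hev := hcont.eventually_lt (continuousAt_const (y := 2 / 3 * supD g + ε)) (by simp; linarith)
    filter_upwards [hn, hev] with z hz hzl
    have := green_lip hg hMg (z := z) (by simpa using hz)
    rw [sub_zero]
    exact this.trans (mul_le_mul_of_nonneg_right hzl.le (norm_nonneg _))
  calc ‖fderiv ℝ f 0‖ = ‖L - (L - fderiv ℝ f 0)‖ := by rw [sub_sub_cancel]
    _ ≤ ‖L‖ + ‖L - fderiv ℝ f 0‖ := norm_sub_le _ _
    _ ≤ _ := add_le_add hLb hGb
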